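/- Let ρ ∈ (−1, 1) and n ≥ 1, and let Z₁, …, Zₙ be independent and identically distributed random variables each distributed as Z = XY, where X and V are independent standard normal random variables and Y = ρX + √(1 − ρ²)V. Set W = Z₁ + ⋯ + Zₙ. Then for every twice differentiable function f : ℝ → ℝ such that E|f(W)|, E|W f(W)|, E|f'(W)|, E|W f'(W)| and E|W f''(W)| are all finite, one has E[(W − nρ) f(W)] = E[(1 − ρ²) W f''(W) + (n(1 − ρ²) + 2ρW) f'(W)]. -/

import Mathlib

open MeasureTheory ProbabilityTheory

/-- The law of `Z = XY` where `X, V` are independent standard normals and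
`Y = ρX + √(1 − ρ²)V`. -/
noncomputable def lawZ (ρ : ℝ) : Measure ℝ :=
  Measure.map (fun p : ℝ × ℝ => p.1 * (ρ * p.1 + Real.sqrt (1 - ρ ^ 2) * p.2))
    ((gaussianReal 0 1).prod (gaussianReal 0 1))

open Set Filter Topology

/-- A Bessel-type integral: up to a power of `|x|`, the modified Bessel function of the second
kind. -/
noncomputable def besselIntegral (α a x : ℝ) : ℝ :=
  ∫ r in Ioi (0 : ℝ), r ^ a * Real.exp (-α * (r + x ^ 2 / r))

lemma exp_neg_div_le {β r : ℝ} (hβ : 0 < β) (hr : 0 < r) (k : ℕ) :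
    Real.exp (-(β / r)) ≤ k.factorial / β ^ k * r ^ k := by
  have h := Real.pow_div_factorial_le_exp (x := β / r) (by positivity) k
  rw [Real.exp_neg, inv_le_comm₀ (Real.exp_pos _) (by positivity)]
  refine le_trans (le_of_eq ?_) h
  rw [div_pow]
  field_simp

lemma integrableOn_rpow_mul_exp_neg_mul {α a : ℝ} (hα : 0 < α) (ha : -1 < a) :
    IntegrableOn (fun r : ℝ => r ^ a * Real.exp (-α * r)) (Ioi 0) := by
  simpa using integrableOn_rpow_mul_exp_neg_mul_rpow (p := 1) ha one_pos hα

lemma rpow_mul_exp_neg_mul_add_div_le {α β r : ℝ} (hβ : 0 < β) (a : ℝ) (k : ℕ) (hr : 0 < r) :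
    r ^ a * Real.exp (-α * r - β / r)
      ≤ k.factorial / β ^ k * (r ^ (a + k) * Real.exp (-α * r)) := by
  rw [sub_eq_add_neg, Real.exp_add, Real.rpow_add_natCast hr.ne']
  calc r ^ a * (Real.exp (-α * r) * Real.exp (-(β / r)))
      ≤ r ^ a * (Real.exp (-α * r) * (k.factorial / β ^ k * r ^ k)) := by
        gcongr; exact exp_neg_div_le hβ hr k
    _ = _ := by ring

lemma integrableOn_rpow_mul_exp_neg_mul_sub_div {α β : ℝ} (hα : 0 < α) (hβ : 0 < β) (a : ℝ) :
    IntegrableOn (fun r : ℝ => r ^ a * Real.exp (-α * r - β / r)) (Ioi 0) := by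
  obtain ⟨k, hk⟩ := exists_nat_gt (-1 - a)
  refine Integrable.mono' ((integrableOn_rpow_mul_exp_neg_mul (a := a + k) hα
    (by linarith)).const_mul (k.factorial / β ^ k)) (by fun_prop) ?_
  filter_upwards [ae_restrict_mem measurableSet_Ioi] with r hr
  rw [mem_Ioi] at hr
  rw [Real.norm_of_nonneg (by positivity)]
  exact rpow_mul_exp_neg_mul_add_div_le hβ a k hr

lemma neg_mul_add_div (α r x : ℝ) : -α * (r + x ^ 2 / r) = -α * r - α * x ^ 2 / r := by ring

lemma integrableOn_besselIntegrand {α x : ℝ} (hα : 0 < α) (hx : x ≠ 0) (a : ℝ) :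
    IntegrableOn (fun r : ℝ => r ^ a * Real.exp (-α * (r + x ^ 2 / r))) (Ioi 0) := by
  simp_rw [neg_mul_add_div]
  exact integrableOn_rpow_mul_exp_neg_mul_sub_div hα (by positivity) a

lemma hasDerivAt_besselIntegral {α x : ℝ} (hα : 0 < α) (hx : x ≠ 0) (a : ℝ) :
    HasDerivAt (besselIntegral α a) (-2 * α * x * besselIntegral α (a - 1) x) x := by
  have hx' : 0 < |x| := abs_pos.2 hx
  have key := (hasDerivAt_integral_of_dominated_loc_of_deriv_le
    (μ := volume.restrict (Ioi (0 : ℝ))) (x₀ := x) (s := Metric.ball x (|x| / 2))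
    (F := fun y r => r ^ a * Real.exp (-α * (r + y ^ 2 / r)))
    (F' := fun y r => -2 * α * y * (r ^ (a - 1) * Real.exp (-α * (r + y ^ 2 / r))))
    (bound := fun r => 4 * α * |x| *
      (r ^ (a - 1) * Real.exp (-α * r - α * (|x| / 2) ^ 2 / r)))
    (Metric.ball_mem_nhds x (by positivity))
    (Eventually.of_forall fun y => by fun_prop)
    (integrableOn_besselIntegrand hα hx a) (by fun_prop) ?_
    ((integrableOn_rpow_mul_exp_neg_mul_sub_div hα (by positivity) (a - 1)).const_mul _) ?_).2
  · rwa [integral_const_mul] at key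
  · filter_upwards [ae_restrict_mem measurableSet_Ioi] with r hr y hy
    rw [mem_Ioi] at hr
    rw [Metric.mem_ball, Real.dist_eq] at hy
    have h1 : |x| / 2 ≤ |y| := by
      have := abs_sub_abs_le_abs_sub x y
      rw [abs_sub_comm] at this
      linarith
    have h2 : |y| ≤ 2 * |x| := by
      have := abs_sub_abs_le_abs_sub y x
      linarith
    have h3 : (|x| / 2) ^ 2 ≤ y ^ 2 := by
      rw [← sq_abs y]
      gcongr
    rw [norm_mul, Real.norm_of_nonneg (r := r ^ (a - 1) * _) (by positivity), neg_mul_add_div,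
      Real.norm_eq_abs, abs_mul, abs_mul, abs_of_pos hα, abs_neg, abs_two]
    have h4 : 2 * α * |y| ≤ 4 * α * |x| := by nlinarith
    gcongr
  · filter_upwards [ae_restrict_mem measurableSet_Ioi] with r hr y _
    rw [mem_Ioi] at hr
    have h := ((((hasDerivAt_pow 2 y).div_const r).const_add r).const_mul (-α)).exp.const_mul
      (r ^ a)
    refine h.congr_deriv ?_
    rw [Real.rpow_sub_one hr.ne']
    push_cast
    ring

lemma besselIntegral_recurrence {α x : ℝ} (hα : 0 < α) (hx : x ≠ 0) (a : ℝ) :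
    a * besselIntegral α (a - 1) x - α * besselIntegral α a x
      + α * x ^ 2 * besselIntegral α (a - 2) x = 0 := by
  have hβ : 0 < α * x ^ 2 := by positivity
  have hi := fun b => integrableOn_besselIntegrand hα hx b
  have h1 : Tendsto (fun r : ℝ => r ^ a * Real.exp (-α * (r + x ^ 2 / r))) (𝓝[>] 0) (𝓝 0) := by
    obtain ⟨k, hk⟩ := exists_nat_gt (-a)
    have h0 : Tendsto (fun r : ℝ => k.factorial / (α * x ^ 2) ^ k *
        (r ^ (a + k) * Real.exp (-α * r))) (𝓝[>] 0) (𝓝 0) := by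
      have : Continuous fun r : ℝ => k.factorial / (α * x ^ 2) ^ k *
          (r ^ (a + k) * Real.exp (-α * r)) := by
        have := Real.continuous_rpow_const (q := a + k) (by linarith)
        fun_prop
      have h := this.tendsto 0
      rw [Real.zero_rpow (by linarith)] at h
      simpa using h.mono_left nhdsWithin_le_nhds
    refine squeeze_zero' ?_ ?_ h0 <;> filter_upwards [self_mem_nhdsWithin] with r hr <;>
      rw [mem_Ioi] at hr
    · positivity
    · rw [neg_mul_add_div]
      exact rpow_mul_exp_neg_mul_add_div_le hβ a k hr
  have h2 : Tendsto (fun r : ℝ => r ^ a * Real.exp (-α * (r + x ^ 2 / r))) atTop (𝓝 0) := by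
    refine squeeze_zero' ?_ ?_ (tendsto_rpow_mul_exp_neg_mul_atTop_nhds_zero a α hα) <;>
      filter_upwards [eventually_gt_atTop 0] with r hr
    · positivity
    · rw [neg_mul_add_div]
      gcongr
      have : 0 ≤ α * x ^ 2 / r := by positivity
      linarith
  have hu : ∀ r ∈ Ioi (0 : ℝ), HasDerivAt (fun r : ℝ => r ^ a) (a * r ^ (a - 1)) r :=
    fun r hr => Real.hasDerivAt_rpow_const (Or.inl (ne_of_gt hr))
  have hv : ∀ r ∈ Ioi (0 : ℝ), HasDerivAt (fun r : ℝ => Real.exp (-α * (r + x ^ 2 / r)))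
      (Real.exp (-α * (r + x ^ 2 / r)) * (-α * (1 - x ^ 2 / r ^ 2))) r := by
    intro r hr
    have h := (((hasDerivAt_id' r).fun_add
      ((hasDerivAt_inv (ne_of_gt hr)).const_mul (x ^ 2))).const_mul (-α)).exp
    simpa only [div_eq_mul_inv, mul_neg, ← sub_eq_add_neg] using h
  have heq : EqOn (fun r : ℝ => a * (r ^ (a - 1) * Real.exp (-α * (r + x ^ 2 / r)))
        - α * (r ^ a * Real.exp (-α * (r + x ^ 2 / r)))
        + α * x ^ 2 * (r ^ (a - 2) * Real.exp (-α * (r + x ^ 2 / r))))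
      (fun r => a * r ^ (a - 1) * Real.exp (-α * (r + x ^ 2 / r))
        + r ^ a * (Real.exp (-α * (r + x ^ 2 / r)) * (-α * (1 - x ^ 2 / r ^ 2)))) (Ioi 0) := by
    intro r hr
    have hr' : r ≠ 0 := ne_of_gt hr
    have : r ^ (a - 2) = r ^ a / r ^ 2 := by
      exact_mod_cast Real.rpow_sub_natCast hr' a 2
    simp only [this]
    ring
  have hsub : IntegrableOn (fun r : ℝ => a * (r ^ (a - 1) * Real.exp (-α * (r + x ^ 2 / r)))
      - α * (r ^ a * Real.exp (-α * (r + x ^ 2 / r)))) (Ioi 0) :=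
    ((hi (a - 1)).const_mul a).sub ((hi a).const_mul α)
  have hlast := (hi (a - 2)).const_mul (α * x ^ 2)
  have h := integral_Ioi_deriv_mul_eq_sub hu hv
    (IntegrableOn.congr_fun (hsub.add hlast) heq measurableSet_Ioi) h1 h2
  rw [sub_zero, ← setIntegral_congr_fun measurableSet_Ioi heq, integral_add hsub hlast,
    integral_sub ((hi (a - 1)).const_mul a) ((hi a).const_mul α), integral_const_mul,
    integral_const_mul, integral_const_mul] at h
  exact h

lemma continuous_besselIntegral {α a : ℝ} (hα : 0 < α) (ha : -1 < a) :
    Continuous (besselIntegral α a) := by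
  refine continuous_of_dominated (bound := fun r => r ^ a * Real.exp (-α * r))
    (fun x => by fun_prop) (fun x => ?_) (integrableOn_rpow_mul_exp_neg_mul hα ha)
    (Eventually.of_forall fun r => by fun_prop)
  filter_upwards [ae_restrict_mem measurableSet_Ioi] with r hr
  rw [mem_Ioi] at hr
  rw [Real.norm_of_nonneg (by positivity), neg_mul_add_div]
  gcongr
  have : 0 ≤ α * x ^ 2 / r := by positivity
  linarith

lemma abs_mul_exp_neg_sq_div_le {α r : ℝ} (hα : 0 < α) (hr : 0 < r) (x : ℝ) :
    |x| * Real.exp (-(α * x ^ 2 / r)) ≤ (√α)⁻¹ * √r := by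
  have h : √α * |x| / √r ≤ Real.exp (α * x ^ 2 / r) := by
    have h1 := Real.add_one_le_exp (α * x ^ 2 / r)
    have h2 : (√α * |x| / √r) ^ 2 = α * x ^ 2 / r := by
      rw [div_pow, mul_pow, Real.sq_sqrt hα.le, Real.sq_sqrt hr.le, sq_abs]
    nlinarith [sq_nonneg (√α * |x| / √r - 1)]
  rw [Real.exp_neg, ← div_eq_mul_inv, div_le_iff₀ (Real.exp_pos _)]
  have hα' := Real.sqrt_pos.2 hα
  have hr' := Real.sqrt_pos.2 hr
  rw [div_le_iff₀ hr'] at h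
  rw [mul_assoc, ← div_eq_inv_mul, le_div_iff₀ hα']
  linarith

lemma continuous_mul_besselIntegral {α a : ℝ} (hα : 0 < α) (ha : -1 ≤ a) :
    Continuous fun x => x * besselIntegral α a x := by
  simp_rw [besselIntegral, ← integral_const_mul]
  refine continuous_of_dominated
    (bound := fun r => (√α)⁻¹ * (r ^ (a + 1 / 2) * Real.exp (-α * r)))
    (fun x => by fun_prop) (fun x => ?_)
    ((integrableOn_rpow_mul_exp_neg_mul hα (by linarith)).const_mul _)
    (Eventually.of_forall fun r => by fun_prop)
  filter_upwards [ae_restrict_mem measurableSet_Ioi] with r hr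
  rw [mem_Ioi] at hr
  rw [norm_mul, Real.norm_of_nonneg (r := _ * _) (by positivity), neg_mul_add_div, sub_eq_add_neg,
    Real.exp_add, Real.rpow_add hr, ← Real.sqrt_eq_rpow, Real.norm_eq_abs]
  calc |x| * (r ^ a * (Real.exp (-α * r) * Real.exp (-(α * x ^ 2 / r))))
      = r ^ a * Real.exp (-α * r) * (|x| * Real.exp (-(α * x ^ 2 / r))) := by ring
    _ ≤ r ^ a * Real.exp (-α * r) * ((√α)⁻¹ * √r) := by
        exact mul_le_mul_of_nonneg_left (abs_mul_exp_neg_sq_div_le hα hr x) (by positivity)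
    _ = _ := by ring

lemma integral_cexp_affine_gaussianReal (t m σ : ℝ) :
    ∫ v, Complex.exp (t * (m + σ * v : ℝ) * Complex.I) ∂(gaussianReal 0 1)
      = Complex.exp (t * m * Complex.I - t ^ 2 * σ ^ 2 / 2) := by
  have h := charFun_gaussianReal (μ := 0) (v := 1) (t * σ)
  rw [charFun_apply_real] at h
  have : ∀ v : ℝ, Complex.exp (t * (m + σ * v : ℝ) * Complex.I)
      = Complex.exp (t * m * Complex.I) * Complex.exp ((t * σ : ℝ) * v * Complex.I) := by
    intro v
    rw [← Complex.exp_add]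
    push_cast
    ring_nf
  simp_rw [this]
  rw [integral_const_mul, h, ← Complex.exp_add]
  push_cast
  ring_nf

lemma integrable_cexp_ofReal_mul_I {S : Type*} [MeasurableSpace S] {μ : Measure S}
    [IsFiniteMeasure μ] {g : S → ℝ} (hg : Measurable g) (t : ℝ) :
    Integrable (fun p => Complex.exp (t * (g p : ℝ) * Complex.I)) μ := by
  refine Integrable.of_bound (C := 1) (by fun_prop) (Eventually.of_forall fun p => ?_)
  rw [← Complex.ofReal_mul, Complex.norm_exp_ofReal_mul_I]

/-- The complex number whose power `-1/2` is the characteristic function of `lawZ ρ`. -/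
noncomputable def charBase (ρ t : ℝ) : ℂ := 1 + t ^ 2 * (1 - ρ ^ 2) - 2 * t * ρ * Complex.I

lemma charBase_re_pos {ρ : ℝ} (hρ : ρ ∈ Ioo (-1 : ℝ) 1) (t : ℝ) : 0 < (charBase ρ t).re := by
  have h : charBase ρ t = ((1 + t ^ 2 * (1 - ρ ^ 2) : ℝ) : ℂ)
      + ((-(2 * t * ρ) : ℝ) : ℂ) * Complex.I := by
    simp only [charBase]; push_cast; ring
  rw [h, Complex.add_re, Complex.ofReal_re, Complex.re_ofReal_mul, Complex.I_re, mul_zero, add_zero]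
  have : 0 < 1 - ρ ^ 2 := by nlinarith [hρ.1, hρ.2]
  positivity

lemma sq_sqrt_one_sub_sq {ρ : ℝ} (hρ : ρ ∈ Ioo (-1 : ℝ) 1) :
    √(1 - ρ ^ 2) ^ 2 = 1 - ρ ^ 2 := Real.sq_sqrt (by nlinarith [hρ.1, hρ.2])

lemma ofReal_mul_cpow {r : ℝ} (hr : 0 < r) {w : ℂ} (hw : w ≠ 0) (s : ℂ) :
    ((r : ℂ) * w) ^ s = (r : ℂ) ^ s * w ^ s := by
  have hr' : (r : ℂ) ≠ 0 := by exact_mod_cast hr.ne'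
  rw [Complex.cpow_def_of_ne_zero (mul_ne_zero hr' hw), Complex.cpow_def_of_ne_zero hr',
    Complex.cpow_def_of_ne_zero hw, Complex.log_ofReal_mul hr hw, ← Complex.exp_add,
    ← Complex.ofReal_log hr.le, add_mul]

lemma charFun_lawZ {ρ : ℝ} (hρ : ρ ∈ Ioo (-1 : ℝ) 1) (t : ℝ) :
    charFun (lawZ ρ) t = charBase ρ t ^ (-(1 / 2) : ℂ) := by
  have hb := charBase_re_pos hρ t
  have hg : Measurable fun p : ℝ × ℝ => p.1 * (ρ * p.1 + √(1 - ρ ^ 2) * p.2) := by fun_prop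
  have hs : ((√(1 - ρ ^ 2) : ℝ) : ℂ) ^ 2 = 1 - ρ ^ 2 := by
    exact_mod_cast sq_sqrt_one_sub_sq hρ
  rw [charFun_apply_real, lawZ, integral_map hg.aemeasurable (by fun_prop),
    integral_prod _ (integrable_cexp_ofReal_mul_I hg t)]
  have h1 : ∀ x : ℝ, ∫ v, Complex.exp (t * (x * (ρ * x + √(1 - ρ ^ 2) * v) : ℝ) * Complex.I)
      ∂(gaussianReal 0 1) = Complex.exp (-(charBase ρ t - 1) / 2 * x ^ 2) := by
    intro x
    have := integral_cexp_affine_gaussianReal t (ρ * x ^ 2) (x * √(1 - ρ ^ 2))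
    refine Eq.trans ?_ (this.trans ?_)
    · congr 1; ext v; congr 4; ring
    · congr 1
      push_cast
      rw [mul_pow, hs, charBase]
      ring
  simp_rw [h1]
  rw [integral_gaussianReal_eq_integral_smul one_ne_zero]
  have h2 : ∀ x : ℝ, gaussianPDFReal 0 1 x • Complex.exp (-(charBase ρ t - 1) / 2 * x ^ 2)
      = ((√(2 * Real.pi))⁻¹ : ℝ) * Complex.exp (-(charBase ρ t / 2) * x ^ 2) := by
    intro x
    rw [gaussianPDFReal, Complex.real_smul]
    push_cast
    rw [mul_assoc, ← Complex.exp_add]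
    simp only [mul_one, sub_zero]
    ring_nf
  simp_rw [h2]
  rw [integral_const_mul, integral_gaussian_complex (by simpa using hb)]
  have hb0 : charBase ρ t ≠ 0 := by
    rintro h
    rw [h] at hb
    simp at hb
  have harg : (charBase ρ t).arg ≠ Real.pi := by
    intro h
    rw [Complex.arg_eq_pi_iff] at h
    linarith [h.1]
  rw [show (Real.pi : ℂ) / (charBase ρ t / 2) = ((2 * Real.pi : ℝ) : ℂ) * (charBase ρ t)⁻¹ by
      push_cast; field_simp,
    ofReal_mul_cpow (by positivity) (inv_ne_zero hb0), Complex.inv_cpow _ _ harg, ← Complex.cpow_neg,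
    ← mul_assoc]
  have h3 : ((2 * Real.pi : ℝ) : ℂ) ^ (1 / 2 : ℂ) = (√(2 * Real.pi) : ℝ) := by
    rw [Real.sqrt_eq_rpow, Complex.ofReal_cpow (by positivity)]
    norm_num
  rw [h3, ← Complex.ofReal_mul, inv_mul_cancel₀ (by positivity)]
  simp

/-- The law of `ρ R + √(1 - ρ²) √R V` where `R` is chi-squared with `n` degrees of freedom and
`V` is an independent standard normal. -/
noncomputable def chiSqMixture (ρ : ℝ) (n : ℕ) : Measure ℝ :=
  Measure.map (fun p : ℝ × ℝ => ρ * p.1 + √(1 - ρ ^ 2) * √p.1 * p.2)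
    ((gammaMeasure (n / 2) (1 / 2)).prod (gaussianReal 0 1))

lemma isProbabilityMeasure_gammaMeasure_half {n : ℕ} (hn : 1 ≤ n) :
    IsProbabilityMeasure (gammaMeasure (n / 2) (1 / 2)) :=
  isProbabilityMeasure_gammaMeasure (by positivity) (by norm_num)

lemma mgf_gammaMeasure {a b z : ℝ} (ha : 0 < a) (hb : 0 < b) (hz : z < b) :
    mgf id (gammaMeasure a b) z = (1 - z / b) ^ (-a) := by
  have hΓ := Real.Gamma_pos_of_pos ha
  have hbz : 0 < b - z := sub_pos.2 hz
  rw [mgf, gammaMeasure, integral_withDensity_eq_integral_toReal_smul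
    (by unfold gammaPDF; fun_prop) (by simp [gammaPDF]),
    ← setIntegral_eq_integral_of_forall_compl_eq_zero (s := Ici 0)
    (fun r hr => by rw [gammaPDF_of_neg (by simpa using hr)]; simp), integral_Ici_eq_integral_Ioi]
  have h : EqOn (fun r : ℝ => (gammaPDF a b r).toReal • Real.exp (z * id r))
      (fun r => b ^ a / Real.Gamma a * (r ^ (a - 1) * Real.exp (-((b - z) * r)))) (Ioi 0) := by
    intro r hr
    rw [mem_Ioi] at hr
    simp only [id]
    rw [gammaPDF_of_nonneg hr.le, ENNReal.toReal_ofReal (by positivity), smul_eq_mul, mul_assoc,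
      mul_assoc, ← Real.exp_add]
    ring_nf
  rw [setIntegral_congr_fun measurableSet_Ioi h, integral_const_mul,
    Real.integral_rpow_mul_exp_neg_mul_Ioi ha hbz,
    show 1 - z / b = (b - z) / b by field_simp, Real.rpow_neg (by positivity),
    Real.div_rpow hbz.le hb.le, Real.div_rpow one_pos.le hbz.le, Real.one_rpow]
  field_simp

lemma complexMGF_gammaMeasure {a b : ℝ} {z : ℂ} (ha : 0 < a) (hb : 0 < b) (hz : z.re < b) :
    complexMGF id (gammaMeasure a b) z = (1 - z / b) ^ (-a : ℂ) := by
  have hset : Iio b ⊆ integrableExpSet id (gammaMeasure a b) := by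
    intro y hy
    by_contra h
    have h1 : mgf id (gammaMeasure a b) y = 0 := integral_undef h
    rw [mgf_gammaMeasure ha hb hy] at h1
    have : 0 < 1 - y / b := by rw [sub_pos, div_lt_one hb]; exact hy
    exact (Real.rpow_pos_of_pos this _).ne' h1
  have hopen : IsOpen {z : ℂ | z.re < b} := isOpen_lt Complex.continuous_re continuous_const
  have hslit : ∀ w : ℂ, w.re < b → 1 - w / b ∈ Complex.slitPlane := by
    intro w hw
    left
    rw [Complex.sub_re, Complex.one_re, Complex.div_ofReal_re, sub_pos, div_lt_one hb]
    exact hw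
  have hX : AnalyticOnNhd ℂ (complexMGF id (gammaMeasure a b)) {z : ℂ | z.re < b} :=
    analyticOnNhd_complexMGF.mono fun w hw => interior_maximal hset isOpen_Iio hw
  have hY : AnalyticOnNhd ℂ (fun w : ℂ => (1 - w / b) ^ (-a : ℂ)) {z : ℂ | z.re < b} := by
    refine DifferentiableOn.analyticOnNhd (fun w hw => ?_) hopen
    refine DifferentiableAt.differentiableWithinAt ?_
    exact DifferentiableAt.cpow (by fun_prop) (by fun_prop) (hslit w hw)
  refine hX.eqOn_of_preconnected_of_frequently_eq hY
    (convex_halfSpace_re_lt b).isPreconnected (z₀ := ((0 : ℝ) : ℂ)) (by simpa using hb) ?_ hz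
  have hreal : ∀ᶠ x : ℝ in 𝓝[≠] 0, complexMGF id (gammaMeasure a b) x
      = (1 - (x : ℂ) / b) ^ (-a : ℂ) := by
    filter_upwards [nhdsWithin_le_nhds (Iio_mem_nhds hb)] with x hx
    have : 0 ≤ 1 - x / b := by rw [sub_nonneg, div_le_one hb]; exact (le_of_lt hx)
    rw [complexMGF_ofReal, mgf_gammaMeasure ha hb hx, Complex.ofReal_cpow this]
    push_cast
    rfl
  have htend : Tendsto ((↑) : ℝ → ℂ) (𝓝[≠] 0) (𝓝[≠] ((0 : ℝ) : ℂ)) :=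
    Complex.continuous_ofReal.continuousWithinAt.tendsto_nhdsWithin fun x hx => by simpa using hx
  exact htend.frequently hreal.frequently

lemma charFun_chiSqMixture {ρ : ℝ} (hρ : ρ ∈ Ioo (-1 : ℝ) 1) {n : ℕ} (hn : 1 ≤ n) (t : ℝ) :
    charFun (chiSqMixture ρ n) t = charBase ρ t ^ (-(n / 2) : ℂ) := by
  have := isProbabilityMeasure_gammaMeasure_half hn
  have hn0 : (0 : ℝ) < n := by exact_mod_cast hn
  have hb := charBase_re_pos hρ t
  have hg : Measurable fun p : ℝ × ℝ => ρ * p.1 + √(1 - ρ ^ 2) * √p.1 * p.2 := by fun_prop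
  have hs : ((√(1 - ρ ^ 2) : ℝ) : ℂ) ^ 2 = 1 - ρ ^ 2 := by
    exact_mod_cast sq_sqrt_one_sub_sq hρ
  rw [charFun_apply_real, chiSqMixture, integral_map hg.aemeasurable (by fun_prop),
    integral_prod _ (integrable_cexp_ofReal_mul_I hg t)]
  simp_rw [integral_cexp_affine_gaussianReal]
  have hae : ∀ᵐ r ∂(gammaMeasure (n / 2) (1 / 2)), 0 ≤ r := by
    rw [gammaMeasure, ae_withDensity_iff (by unfold gammaPDF; fun_prop)]
    refine Eventually.of_forall fun r hr => ?_
    by_contra h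
    exact hr (gammaPDF_of_neg (not_le.1 h))
  have h := complexMGF_gammaMeasure (z := (1 - charBase ρ t) / 2) (a := n / 2) (b := 1 / 2)
    (by positivity) (by norm_num) (by simp; linarith)
  rw [complexMGF] at h
  refine Eq.trans ?_ (h.trans ?_)
  · refine integral_congr_ae ?_
    filter_upwards [hae] with r hr
    have hr2 : ((√r : ℝ) : ℂ) ^ 2 = r := by exact_mod_cast Real.sq_sqrt hr
    congr 1
    push_cast
    rw [mul_pow, hs, hr2, charBase, id]
    ring
  · push_cast
    congr 1
    ring

lemma map_sum_eq_chiSqMixture {Ω : Type*} [MeasurableSpace Ω] {P : Measure Ω}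
    [IsProbabilityMeasure P] {ρ : ℝ} (hρ : ρ ∈ Ioo (-1 : ℝ) 1) {n : ℕ} (hn : 1 ≤ n)
    {Zs : Fin n → Ω → ℝ} (hmeas : ∀ i, Measurable (Zs i)) (hindep : iIndepFun Zs P)
    (hlaw : ∀ i, P.map (Zs i) = lawZ ρ) :
    P.map (fun ω => ∑ i, Zs i ω) = chiSqMixture ρ n := by
  have := isProbabilityMeasure_gammaMeasure_half hn
  have : IsFiniteMeasure (chiSqMixture ρ n) := by unfold chiSqMixture; infer_instance
  refine Measure.ext_of_charFun (funext fun t => ?_)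
  rw [hindep.charFun_map_fun_sum_eq_prod fun i => (hmeas i).aemeasurable,
    charFun_chiSqMixture hρ hn]
  simp only [hlaw, Finset.prod_apply, charFun_lawZ hρ, Finset.prod_const, Finset.card_univ,
    Fintype.card_fin]
  rw [← Complex.cpow_nat_mul]
  ring_nf

/-- The normalising constant of `sumDensity`. -/
noncomputable def sumDensityConst (ρ : ℝ) (n : ℕ) : ℝ :=
  (1 / 2 : ℝ) ^ ((n : ℝ) / 2) / Real.Gamma (n / 2) * (√(2 * Real.pi * (1 - ρ ^ 2)))⁻¹

/-- The density of `chiSqMixture ρ n`. -/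
noncomputable def sumDensity (ρ : ℝ) (n : ℕ) (x : ℝ) : ℝ :=
  sumDensityConst ρ n * Real.exp (ρ / (1 - ρ ^ 2) * x)
    * besselIntegral (1 / (2 * (1 - ρ ^ 2))) ((n - 3) / 2) x

lemma sumDensityConst_nonneg (ρ : ℝ) (n : ℕ) : 0 ≤ sumDensityConst ρ n := by
  have := Real.Gamma_nonneg_of_nonneg (s := (n : ℝ) / 2) (by positivity)
  unfold sumDensityConst
  positivity

lemma besselIntegral_nonneg (α a x : ℝ) : 0 ≤ besselIntegral α a x :=
  setIntegral_nonneg measurableSet_Ioi fun r hr => by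
    rw [mem_Ioi] at hr
    positivity

lemma measurable_besselIntegral (α a : ℝ) : Measurable (besselIntegral α a) := by
  have : StronglyMeasurable fun p : ℝ × ℝ => p.2 ^ a * Real.exp (-α * (p.2 + p.1 ^ 2 / p.2)) :=
    Measurable.stronglyMeasurable (by fun_prop)
  exact (this.integral_prod_right (ν := volume.restrict (Ioi 0))).measurable

lemma measurable_sumDensity (ρ : ℝ) (n : ℕ) : Measurable (sumDensity ρ n) := by
  have := measurable_besselIntegral (1 / (2 * (1 - ρ ^ 2))) ((n - 3) / 2)
  unfold sumDensity
  fun_prop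

lemma sumDensity_nonneg (ρ : ℝ) (n : ℕ) (x : ℝ) : 0 ≤ sumDensity ρ n x := by
  have := sumDensityConst_nonneg ρ n
  have := besselIntegral_nonneg (1 / (2 * (1 - ρ ^ 2))) ((n - 3) / 2) x
  unfold sumDensity
  positivity

lemma one_sub_sq_pos {ρ : ℝ} (hρ : ρ ∈ Ioo (-1 : ℝ) 1) : 0 < 1 - ρ ^ 2 := by
  nlinarith [hρ.1, hρ.2]

lemma gammaPDF_mul_gaussianPDF {ρ : ℝ} (hρ : ρ ∈ Ioo (-1 : ℝ) 1) {n : ℕ} (hn : 1 ≤ n) {r : ℝ}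
    (hr : 0 < r) (x : ℝ) :
    gammaPDF (n / 2) (1 / 2) r * gaussianPDF (ρ * r) ((1 - ρ ^ 2) * r).toNNReal x
      = ENNReal.ofReal (sumDensityConst ρ n * Real.exp (ρ / (1 - ρ ^ 2) * x)
        * (r ^ (((n : ℝ) - 3) / 2)
          * Real.exp (-(1 / (2 * (1 - ρ ^ 2))) * (r + x ^ 2 / r)))) := by
  have hs := one_sub_sq_pos hρ
  have hn0 : (0 : ℝ) < n := by exact_mod_cast hn
  have hΓ := Real.Gamma_pos_of_pos (s := (n : ℝ) / 2) (by positivity)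
  rw [gammaPDF_of_nonneg hr.le, gaussianPDF, ← ENNReal.ofReal_mul (by positivity),
    gaussianPDFReal, Real.coe_toNNReal _ (by positivity), sumDensityConst]
  congr 1
  have h1 : r ^ (((n : ℝ) - 3) / 2) = r ^ ((n : ℝ) / 2 - 1) * (√r)⁻¹ := by
    rw [Real.sqrt_eq_rpow, ← Real.rpow_neg hr.le, ← Real.rpow_add hr]
    ring_nf
  have h2 : √(2 * Real.pi * ((1 - ρ ^ 2) * r)) = √(2 * Real.pi * (1 - ρ ^ 2)) * √r := by
    rw [← Real.sqrt_mul (by positivity)]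
    ring_nf
  have h3 : Real.exp (-(1 / 2 * r)) * Real.exp (-(x - ρ * r) ^ 2 / (2 * ((1 - ρ ^ 2) * r)))
      = Real.exp (ρ / (1 - ρ ^ 2) * x)
        * Real.exp (-(1 / (2 * (1 - ρ ^ 2))) * (r + x ^ 2 / r)) := by
    rw [← Real.exp_add, ← Real.exp_add]
    congr 1
    field_simp
    ring
  rw [h1, h2, mul_inv]
  linear_combination (1 / 2 : ℝ) ^ ((n : ℝ) / 2) / Real.Gamma (n / 2) * r ^ ((n : ℝ) / 2 - 1)
    * (√(2 * Real.pi * (1 - ρ ^ 2)))⁻¹ * (√r)⁻¹ * h3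

lemma lintegral_gaussianReal_affine {g : ℝ → ENNReal} (hg : Measurable g) (m : ℝ) {σ : ℝ}
    (hσ : σ ≠ 0) :
    ∫⁻ v, g (m + σ * v) ∂(gaussianReal 0 1)
      = ∫⁻ x, gaussianPDF m (σ ^ 2).toNNReal x * g x := by
  have h : (gaussianReal 0 1).map (fun v => m + σ * v) = gaussianReal m (σ ^ 2).toNNReal := by
    have h1 : (fun v => m + σ * v) = (fun v => m + v) ∘ (fun v => σ * v) := rfl
    rw [h1, ← Measure.map_map (by fun_prop) (by fun_prop), gaussianReal_map_const_mul,
      gaussianReal_map_const_add]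
    congr 1
    · ring
    · rw [mul_one]
      ext
      simp [sq_nonneg]
  have hv : (σ ^ 2).toNNReal ≠ 0 := by
    rw [Ne, Real.toNNReal_eq_zero, not_le]
    positivity
  rw [← lintegral_map (f := g) hg (g := fun v => m + σ * v) (by fun_prop), h,
    gaussianReal_of_var_ne_zero _ hv,
    lintegral_withDensity_eq_lintegral_mul _ (measurable_gaussianPDF _ _) hg]
  rfl

lemma lintegral_gammaMeasure {a b : ℝ} {G : ℝ → ENNReal} (hG : Measurable G) :
    ∫⁻ r, G r ∂(gammaMeasure a b) = ∫⁻ r in Ioi 0, gammaPDF a b r * G r := by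
  rw [gammaMeasure, lintegral_withDensity_eq_lintegral_mul _ (by unfold gammaPDF; fun_prop) hG,
    ← lintegral_indicator measurableSet_Ioi]
  refine lintegral_congr_ae ?_
  filter_upwards [compl_mem_ae_iff.2 (measure_singleton (0 : ℝ))] with r hr
  rcases lt_or_gt_of_ne hr with h | h
  · simp [gammaPDF_of_neg h, not_lt.2 h.le]
  · simp [mem_Ioi.2 h]

lemma chiSqMixture_eq_withDensity {ρ : ℝ} (hρ : ρ ∈ Ioo (-1 : ℝ) 1) {n : ℕ} (hn : 1 ≤ n) :
    chiSqMixture ρ n = volume.withDensity fun x => ENNReal.ofReal (sumDensity ρ n x) := by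
  have := isProbabilityMeasure_gammaMeasure_half hn
  have hs := one_sub_sq_pos hρ
  have hc := sumDensityConst_nonneg ρ n
  have hmap : Measurable fun p : ℝ × ℝ => ρ * p.1 + √(1 - ρ ^ 2) * √p.1 * p.2 := by fun_prop
  refine Measure.ext_of_lintegral _ fun g hg => ?_
  have hgm : Measurable fun p : ℝ × ℝ => g (ρ * p.1 + √(1 - ρ ^ 2) * √p.1 * p.2) := hg.comp hmap
  rw [chiSqMixture, lintegral_map hg hmap, lintegral_prod _ hgm.aemeasurable,
    lintegral_gammaMeasure hgm.lintegral_prod_right',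
    lintegral_withDensity_eq_lintegral_mul _ (measurable_sumDensity ρ n).ennreal_ofReal hg]
  calc
    _ = ∫⁻ r in Ioi (0 : ℝ), ∫⁻ x, ENNReal.ofReal (sumDensityConst ρ n
          * Real.exp (ρ / (1 - ρ ^ 2) * x) * (r ^ (((n : ℝ) - 3) / 2)
          * Real.exp (-(1 / (2 * (1 - ρ ^ 2))) * (r + x ^ 2 / r)))) * g x := by
        refine setLIntegral_congr_fun measurableSet_Ioi fun r hr => ?_
        rw [mem_Ioi] at hr
        simp only
        rw [lintegral_gaussianReal_affine hg _ (by positivity), mul_pow, Real.sq_sqrt hs.le,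
          Real.sq_sqrt hr.le, ← lintegral_const_mul _ (by fun_prop)]
        simp_rw [← mul_assoc, gammaPDF_mul_gaussianPDF hρ hn hr, mul_assoc]
    _ = ∫⁻ x, ∫⁻ r in Ioi (0 : ℝ), ENNReal.ofReal (sumDensityConst ρ n
          * Real.exp (ρ / (1 - ρ ^ 2) * x) * (r ^ (((n : ℝ) - 3) / 2)
          * Real.exp (-(1 / (2 * (1 - ρ ^ 2))) * (r + x ^ 2 / r)))) * g x :=
        lintegral_lintegral_swap (Measurable.aemeasurable (by fun_prop))
    _ = _ := by
        refine lintegral_congr_ae ?_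
        filter_upwards [compl_mem_ae_iff.2 (measure_singleton (0 : ℝ))] with x hx
        rw [lintegral_mul_const _ (by fun_prop), Pi.mul_apply, ← ofReal_integral_eq_lintegral_ofReal
          ((integrableOn_besselIntegrand (by positivity) hx _).const_mul _), integral_const_mul]
        · rfl
        · filter_upwards [ae_restrict_mem measurableSet_Ioi] with r hr
          rw [mem_Ioi] at hr
          simp only [Pi.zero_apply]
          positivity

/-- The companion of `sumDensity` whose Bessel order is raised by one. -/
noncomputable def sumCodensity (ρ : ℝ) (n : ℕ) (x : ℝ) : ℝ :=
  sumDensityConst ρ n * Real.exp (ρ / (1 - ρ ^ 2) * x)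
    * besselIntegral (1 / (2 * (1 - ρ ^ 2))) ((n - 1) / 2) x

lemma continuous_sumCodensity {ρ : ℝ} (hρ : ρ ∈ Ioo (-1 : ℝ) 1) {n : ℕ} (hn : 1 ≤ n) :
    Continuous (sumCodensity ρ n) := by
  have hs := one_sub_sq_pos hρ
  have hn' : (1 : ℝ) ≤ n := by exact_mod_cast hn
  have := continuous_besselIntegral (α := 1 / (2 * (1 - ρ ^ 2))) (a := ((n : ℝ) - 1) / 2)
    (by positivity) (by linarith)
  unfold sumCodensity
  fun_prop

lemma continuous_mul_sumDensity {ρ : ℝ} (hρ : ρ ∈ Ioo (-1 : ℝ) 1) {n : ℕ} (hn : 1 ≤ n) :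
    Continuous fun x => x * sumDensity ρ n x := by
  have hs := one_sub_sq_pos hρ
  have hn' : (1 : ℝ) ≤ n := by exact_mod_cast hn
  have := continuous_mul_besselIntegral (α := 1 / (2 * (1 - ρ ^ 2))) (a := ((n : ℝ) - 3) / 2)
    (by positivity) (by linarith)
  have h : (fun x => x * sumDensity ρ n x) = fun x => sumDensityConst ρ n
      * Real.exp (ρ / (1 - ρ ^ 2) * x)
      * (x * besselIntegral (1 / (2 * (1 - ρ ^ 2))) ((n - 3) / 2) x) := by
    ext x
    unfold sumDensity
    ring
  rw [h]
  fun_prop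

lemma hasDerivAt_exp_const_mul (c x : ℝ) :
    HasDerivAt (fun x => Real.exp (c * x)) (Real.exp (c * x) * c) x := by
  simpa using ((hasDerivAt_id x).const_mul c).exp

lemma hasDerivAt_sumCodensity {ρ : ℝ} (hρ : ρ ∈ Ioo (-1 : ℝ) 1) (n : ℕ) {x : ℝ} (hx : x ≠ 0) :
    HasDerivAt (sumCodensity ρ n)
      ((ρ * sumCodensity ρ n x - x * sumDensity ρ n x) / (1 - ρ ^ 2)) x := by
  have hs := one_sub_sq_pos hρ
  have hB := hasDerivAt_besselIntegral (α := 1 / (2 * (1 - ρ ^ 2))) (by positivity) hx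
    (((n : ℝ) - 1) / 2)
  rw [show ((n : ℝ) - 1) / 2 - 1 = (n - 3) / 2 by ring] at hB
  refine (((hasDerivAt_exp_const_mul (ρ / (1 - ρ ^ 2)) x).const_mul
    (sumDensityConst ρ n)).mul hB).congr_deriv ?_
  unfold sumCodensity sumDensity
  field_simp
  ring

lemma hasDerivAt_mul_sumDensity {ρ : ℝ} (hρ : ρ ∈ Ioo (-1 : ℝ) 1) (n : ℕ) {x : ℝ} (hx : x ≠ 0) :
    HasDerivAt (fun x => x * sumDensity ρ n x)
      (n * sumDensity ρ n x
        + (ρ * (x * sumDensity ρ n x) - sumCodensity ρ n x) / (1 - ρ ^ 2)) x := by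
  have hs := one_sub_sq_pos hρ
  have hα : 0 < 1 / (2 * (1 - ρ ^ 2)) := by positivity
  have hB := hasDerivAt_besselIntegral hα hx (((n : ℝ) - 3) / 2)
  have hrec := besselIntegral_recurrence hα hx (((n : ℝ) - 1) / 2)
  rw [show ((n : ℝ) - 1) / 2 - 1 = (n - 3) / 2 by ring,
    show ((n : ℝ) - 1) / 2 - 2 = (n - 3) / 2 - 1 by ring] at hrec
  refine ((hasDerivAt_id x).mul (((hasDerivAt_exp_const_mul (ρ / (1 - ρ ^ 2)) x).const_mul
    (sumDensityConst ρ n)).mul hB)).congr_deriv ?_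
  unfold sumCodensity sumDensity
  simp only [id, Pi.mul_apply]
  linear_combination (norm := skip)
    (-2 * sumDensityConst ρ n * Real.exp (ρ / (1 - ρ ^ 2) * x)) * hrec
  field_simp
  ring

/-- The Stein operator at `x`, for a function with value `y` and derivatives `y₁`, `y₂` at `x`. -/
def steinOp (ρ : ℝ) (n : ℕ) (x y y₁ y₂ : ℝ) : ℝ :=
  (1 - ρ ^ 2) * x * y₂ + (n * (1 - ρ ^ 2) + 2 * ρ * x) * y₁ - (x - n * ρ) * y

/-- `sumDensity` as a measure. -/
noncomputable def sumMeasure (ρ : ℝ) (n : ℕ) : Measure ℝ :=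
  volume.withDensity fun x => ENNReal.ofReal (sumDensity ρ n x)

lemma setIntegral_steinOp_eq_zero {ρ : ℝ} (hρ : ρ ∈ Ioo (-1 : ℝ) 1) {n : ℕ} (hn : 1 ≤ n)
    {g g₁ g₂ : ℝ → ℝ} (hg : ∀ x, HasDerivAt g (g₁ x) x) (hg₁ : ∀ x, HasDerivAt g₁ (g₂ x) x)
    {R : ℝ} (hR : 0 ≤ R) (hgl : g (-R) = 0) (hgr : g R = 0) (hgl₁ : g₁ (-R) = 0) (hgr₁ : g₁ R = 0)
    (hinteg : IntegrableOn (fun x => steinOp ρ n x (g x) (g₁ x) (g₂ x)) (Icc (-R) R)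
      (sumMeasure ρ n)) :
    ∫ x in Icc (-R) R, steinOp ρ n x (g x) (g₁ x) (g₂ x) ∂(sumMeasure ρ n) = 0 := by
  have hs := one_sub_sq_pos hρ
  have hm : Measurable fun x => ENNReal.ofReal (sumDensity ρ n x) :=
    (measurable_sumDensity ρ n).ennreal_ofReal
  rw [sumMeasure, IntegrableOn, restrict_withDensity measurableSet_Icc,
    integrable_withDensity_iff_integrable_smul' hm (by simp)] at hinteg
  rw [sumMeasure, setIntegral_withDensity_eq_setIntegral_toReal_smul hm (by simp) _
    measurableSet_Icc]
  simp only [ENNReal.toReal_ofReal (sumDensity_nonneg ρ n _), smul_eq_mul] at hinteg ⊢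
  have hle : -R ≤ R := by linarith
  rw [integral_Icc_eq_integral_Ioc, ← intervalIntegral.integral_of_le hle,
    integral_eq_of_hasDerivAt_off_countable_of_le
      (fun x => (1 - ρ ^ 2) * ((x * sumDensity ρ n x) * g₁ x)
        + (ρ * (x * sumDensity ρ n x) + sumCodensity ρ n x) * g x) _ hle
      (countable_singleton (0 : ℝ))]
  · simp [hgl, hgr, hgl₁, hgr₁]
  · have hc : Continuous g := continuous_iff_continuousAt.2 fun x => (hg x).continuousAt
    have hc₁ : Continuous g₁ := continuous_iff_continuousAt.2 fun x => (hg₁ x).continuousAt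
    have h := continuous_mul_sumDensity hρ hn
    have h' := continuous_sumCodensity hρ hn
    exact (((h.mul hc₁).const_mul _).add (((h.const_mul ρ).add h').mul hc)).continuousOn
  · rintro x ⟨-, hx⟩
    have h := hasDerivAt_mul_sumDensity hρ n hx
    have h' := hasDerivAt_sumCodensity hρ n hx
    refine (((h.mul (hg₁ x)).const_mul (1 - ρ ^ 2)).add
      (((h.const_mul ρ).add h').mul (hg x))).congr_deriv ?_
    simp only [Pi.add_apply, steinOp]
    field_simp
    ring
  · exact (intervalIntegrable_iff_integrableOn_Icc_of_le hle).2 hinteg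

/-- A `C¹` cutoff function supported on `[-R, R]`. -/
noncomputable def quarticBump (R x : ℝ) : ℝ := (1 - (x / R) ^ 2) ^ 2

/-- The first derivative of `quarticBump`. -/
noncomputable def quarticBumpDeriv (R x : ℝ) : ℝ := -4 * (x / R) * (1 - (x / R) ^ 2) / R

/-- The second derivative of `quarticBump`. -/
noncomputable def quarticBumpDeriv₂ (R x : ℝ) : ℝ := (-4 + 12 * (x / R) ^ 2) / R ^ 2

lemma hasDerivAt_quarticBump (R x : ℝ) :
    HasDerivAt (quarticBump R) (quarticBumpDeriv R x) x := by
  have h := (((((hasDerivAt_id x).div_const R).pow 2).const_sub 1).pow 2)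
  refine h.congr_deriv ?_
  simp only [id, quarticBumpDeriv, Pi.pow_apply]
  ring

lemma hasDerivAt_quarticBumpDeriv (R x : ℝ) :
    HasDerivAt (quarticBumpDeriv R) (quarticBumpDeriv₂ R x) x := by
  have h0 := (hasDerivAt_id x).div_const R
  have h := ((h0.const_mul (-4)).mul ((h0.pow 2).const_sub 1)).div_const R
  refine h.congr_deriv ?_
  simp only [id, quarticBumpDeriv₂, Pi.pow_apply]
  ring

lemma abs_quarticBump_le {R x : ℝ} (hR : 1 ≤ R) (hx : x ∈ Icc (-R) R) :
    |quarticBump R x| ≤ 1 ∧ |quarticBumpDeriv R x| ≤ 4 ∧ |quarticBumpDeriv₂ R x| ≤ 16 := by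
  have hR0 : 0 < R := by linarith
  have hu : |x / R| ≤ 1 := by
    rw [abs_div, abs_of_pos hR0, div_le_one hR0]
    exact abs_le.2 hx
  have hu2 : (x / R) ^ 2 ≤ 1 := (sq_le_one_iff_abs_le_one _).2 hu
  have hv : |1 - (x / R) ^ 2| ≤ 1 := abs_le.2 ⟨by linarith, by linarith [sq_nonneg (x / R)]⟩
  refine ⟨?_, ?_, ?_⟩
  · rw [quarticBump, abs_pow]
    exact pow_le_one₀ (abs_nonneg _) hv
  · rw [quarticBumpDeriv, abs_div, abs_mul, abs_mul, abs_of_pos hR0]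
    refine (div_le_self (by positivity) hR).trans ?_
    rw [abs_of_neg (by norm_num : (-4 : ℝ) < 0)]
    nlinarith [mul_le_one₀ hu (abs_nonneg _) hv]
  · rw [quarticBumpDeriv₂, abs_div, abs_of_pos (by positivity : 0 < R ^ 2)]
    refine (div_le_self (by positivity) (one_le_pow₀ hR)).trans ?_
    exact abs_le.2 ⟨by linarith [sq_nonneg (x / R)], by linarith [sq_nonneg (x / R)]⟩

lemma abs_steinOp_le (ρ : ℝ) (n : ℕ) (x y y₁ y₂ : ℝ) :
    |steinOp ρ n x y y₁ y₂| ≤ |1 - ρ ^ 2| * |x * y₂| + n * |1 - ρ ^ 2| * |y₁|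
      + 2 * |ρ| * |x * y₁| + |x * y| + n * |ρ| * |y| := by
  have h : steinOp ρ n x y y₁ y₂ = (1 - ρ ^ 2) * (x * y₂) + n * (1 - ρ ^ 2) * y₁
      + 2 * ρ * (x * y₁) + -(x * y) + n * ρ * y := by
    unfold steinOp
    ring
  rw [h]
  refine (abs_add_le _ _).trans (add_le_add ((abs_add_le _ _).trans (add_le_add
    ((abs_add_le _ _).trans (add_le_add ((abs_add_le _ _).trans (add_le_add ?_ ?_)) ?_)) ?_)) ?_)
    <;> simp [abs_mul]

lemma abs_mul_add_le {a b u v : ℝ} {c : ℝ} (hu : |u| ≤ 1) (hv : |v| ≤ c) :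
    |a * u + b * v| ≤ |a| + c * |b| := by
  refine (abs_add_le _ _).trans ?_
  rw [abs_mul, abs_mul]
  nlinarith [abs_nonneg a, abs_nonneg b, mul_le_mul_of_nonneg_left hu (abs_nonneg a),
    mul_le_mul_of_nonneg_left hv (abs_nonneg b)]

lemma tendsto_div_natCast_add_one (x : ℝ) :
    Tendsto (fun k : ℕ => x / ((k : ℝ) + 1)) atTop (𝓝 0) :=
  tendsto_const_nhds.div_atTop (tendsto_atTop_add_const_right _ _ tendsto_natCast_atTop_atTop)

lemma integral_steinOp_eq_zero {ρ : ℝ} (hρ : ρ ∈ Ioo (-1 : ℝ) 1) {n : ℕ} (hn : 1 ≤ n)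
    {f f₁ f₂ : ℝ → ℝ} (hf : ∀ x, HasDerivAt f (f₁ x) x) (hf₁ : ∀ x, HasDerivAt f₁ (f₂ x) x)
    (h1 : Integrable f (sumMeasure ρ n))
    (h2 : Integrable (fun x => x * f x) (sumMeasure ρ n))
    (h3 : Integrable f₁ (sumMeasure ρ n))
    (h4 : Integrable (fun x => x * f₁ x) (sumMeasure ρ n))
    (h5 : Integrable (fun x => x * f₂ x) (sumMeasure ρ n)) :
    ∫ x, steinOp ρ n x (f x) (f₁ x) (f₂ x) ∂(sumMeasure ρ n) = 0 := by
  have hc : Continuous f := continuous_iff_continuousAt.2 fun x => (hf x).continuousAt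
  have hc₁ : Continuous f₁ := continuous_iff_continuousAt.2 fun x => (hf₁ x).continuousAt
  have hm₂ : Measurable f₂ := by
    rw [show f₂ = deriv f₁ from funext fun x => (hf₁ x).deriv.symm]
    exact measurable_deriv f₁
  let R : ℕ → ℝ := fun k => k + 1
  have hR : ∀ k, 1 ≤ R k := fun k => by simp [R]
  let g : ℕ → ℝ → ℝ := fun k x => f x * quarticBump (R k) x
  let g₁ : ℕ → ℝ → ℝ := fun k x => f₁ x * quarticBump (R k) x + f x * quarticBumpDeriv (R k) x
  let g₂ : ℕ → ℝ → ℝ := fun k x => f₂ x * quarticBump (R k) x + f₁ x * quarticBumpDeriv (R k) x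
    + (f₁ x * quarticBumpDeriv (R k) x + f x * quarticBumpDeriv₂ (R k) x)
  have hg : ∀ k x, HasDerivAt (g k) (g₁ k x) x := fun k x =>
    (hf x).mul (hasDerivAt_quarticBump _ x)
  have hg₁ : ∀ k x, HasDerivAt (g₁ k) (g₂ k x) x := fun k x =>
    ((hf₁ x).mul (hasDerivAt_quarticBump _ x)).add
      ((hf x).mul (hasDerivAt_quarticBumpDeriv _ x))
  let F : ℕ → ℝ → ℝ := fun k x => steinOp ρ n x (g k x) (g₁ k x) (g₂ k x)
  let bound : ℝ → ℝ := fun x => |1 - ρ ^ 2| * (|x * f₂ x| + 8 * |x * f₁ x| + 16 * |x * f x|)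
    + n * |1 - ρ ^ 2| * (|f₁ x| + 4 * |f x|) + 2 * |ρ| * (|x * f₁ x| + 4 * |x * f x|)
    + |x * f x| + n * |ρ| * |f x|
  have hbound : Integrable bound (sumMeasure ρ n) := by
    have e1 := h1.abs
    have e2 := h2.abs
    have e3 := h3.abs
    have e4 := h4.abs
    have e5 := h5.abs
    exact ((((((e5.add (e4.const_mul 8)).add (e2.const_mul 16)).const_mul _).add
      ((e3.add (e1.const_mul 4)).const_mul _)).add ((e4.add (e2.const_mul 4)).const_mul _)).add
      e2).add (e1.const_mul _)
  have hFle : ∀ k, ∀ x ∈ Icc (-R k) (R k), ‖F k x‖ ≤ bound x := by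
    intro k x hx
    obtain ⟨b0, b1, b2⟩ := abs_quarticBump_le (hR k) hx
    have c0 : ∀ y : ℝ, |y * quarticBump (R k) x| ≤ |y| := fun y => by
      rw [abs_mul]
      exact mul_le_of_le_one_right (abs_nonneg y) b0
    refine (abs_steinOp_le ρ n x _ _ _).trans ?_
    have hxg : |x * g k x| ≤ |x * f x| := by
      simpa only [g, mul_assoc] using c0 (x * f x)
    have hxg₁ : |x * g₁ k x| ≤ |x * f₁ x| + 4 * |x * f x| := by
      have := abs_mul_add_le (a := x * f₁ x) (b := x * f x) b0 b1
      simpa only [g₁, mul_assoc, mul_add] using this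
    have hxg₂ : |x * g₂ k x| ≤ |x * f₂ x| + 8 * |x * f₁ x| + 16 * |x * f x| := by
      have e1 := abs_mul_add_le (a := x * f₂ x) (b := x * f₁ x) b0 b1
      have e2 : |x * f₁ x * quarticBumpDeriv (R k) x| ≤ 4 * |x * f₁ x| := by
        rw [abs_mul, mul_comm]
        exact mul_le_mul_of_nonneg_right b1 (abs_nonneg _)
      have e3 : |x * f x * quarticBumpDeriv₂ (R k) x| ≤ 16 * |x * f x| := by
        rw [abs_mul, mul_comm]
        exact mul_le_mul_of_nonneg_right b2 (abs_nonneg _)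
      have e4 := (abs_add_le _ _).trans (add_le_add e1 ((abs_add_le _ _).trans (add_le_add e2 e3)))
      simp only [g₂, mul_add, ← mul_assoc] at e4 ⊢
      linarith
    have hg1 : |g₁ k x| ≤ |f₁ x| + 4 * |f x| := abs_mul_add_le b0 b1
    have hg0 : |g k x| ≤ |f x| := c0 _
    simp only [bound]
    gcongr
  have hFm : ∀ k, Measurable (F k) := by
    intro k
    simp only [F, steinOp, g, g₁, g₂, quarticBump, quarticBumpDeriv, quarticBumpDeriv₂]
    have := hc.measurable
    have := hc₁.measurable
    fun_prop
  have hFint : ∀ k, IntegrableOn (F k) (Icc (-R k) (R k)) (sumMeasure ρ n) := fun k =>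
    hbound.integrableOn.mono' (hFm k).aestronglyMeasurable
      ((ae_restrict_iff' measurableSet_Icc).2 (.of_forall (hFle k)))
  have hzero : ∀ k, ∫ x, (Icc (-R k) (R k)).indicator (F k) x ∂(sumMeasure ρ n) = 0 := by
    intro k
    have hR0 : R k ≠ 0 := by linarith [hR k]
    rw [integral_indicator measurableSet_Icc]
    refine setIntegral_steinOp_eq_zero hρ hn (hg k) (hg₁ k) (by linarith [hR k]) ?_ ?_ ?_ ?_
      (hFint k) <;> simp [g, g₁, quarticBump, quarticBumpDeriv, neg_div, div_self hR0]
  have hlim : Tendsto (fun k => ∫ x, (Icc (-R k) (R k)).indicator (F k) x ∂(sumMeasure ρ n)) atTop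
      (𝓝 (∫ x, steinOp ρ n x (f x) (f₁ x) (f₂ x) ∂(sumMeasure ρ n))) := by
    refine tendsto_integral_of_dominated_convergence bound
      (fun k => ((hFm k).indicator measurableSet_Icc).aestronglyMeasurable) hbound
      (fun k => .of_forall fun x => ?_) (.of_forall fun x => ?_)
    · by_cases hx : x ∈ Icc (-R k) (R k)
      · rw [indicator_of_mem hx]
        exact hFle k x hx
      · rw [indicator_of_notMem hx, norm_zero]
        positivity
    · have hev : ∀ᶠ k : ℕ in atTop, F k x = (Icc (-R k) (R k)).indicator (F k) x := by
        filter_upwards [eventually_ge_atTop ⌈|x|⌉₊] with k hk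
        have : |x| ≤ R k := (Nat.ceil_le.1 hk).trans (by simp [R])
        rw [indicator_of_mem (show x ∈ Icc (-R k) (R k) from abs_le.1 this)]
      refine Tendsto.congr' hev ?_
      have hu := tendsto_div_natCast_add_one x
      have hi := tendsto_div_natCast_add_one 1
      have t0 : Tendsto (fun k => quarticBump (R k) x) atTop (𝓝 1) := by
        simpa [quarticBump, R] using ((hu.pow 2).const_sub 1).pow 2
      have t1 : Tendsto (fun k => quarticBumpDeriv (R k) x) atTop (𝓝 0) := by
        have := ((hu.const_mul (-4)).mul ((hu.pow 2).const_sub 1)).mul hi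
        simpa [quarticBumpDeriv, R, div_eq_mul_inv] using this
      have t2 : Tendsto (fun k => quarticBumpDeriv₂ (R k) x) atTop (𝓝 0) := by
        have := (((hu.pow 2).const_mul 12).const_add (-4)).mul (hi.pow 2)
        simpa [quarticBumpDeriv₂, R, div_eq_mul_inv] using this
      have tg : Tendsto (fun k => g k x) atTop (𝓝 (f x)) := by
        simpa using t0.const_mul (f x)
      have tg₁ : Tendsto (fun k => g₁ k x) atTop (𝓝 (f₁ x)) := by
        simpa using (t0.const_mul (f₁ x)).add (t1.const_mul (f x))
      have tg₂ : Tendsto (fun k => g₂ k x) atTop (𝓝 (f₂ x)) := by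
        simpa using ((t0.const_mul (f₂ x)).add (t1.const_mul (f₁ x))).add
          ((t1.const_mul (f₁ x)).add (t2.const_mul (f x)))
      exact ((tg₂.const_mul _).add (tg₁.const_mul _)).sub (tg.const_mul _)
  exact tendsto_nhds_unique hlim (by simp [hzero])

/-- Stein-type identity for the sum `W = Z₁ + ⋯ + Zₙ` of `n ≥ 1` i.i.d. copies of the product
`Z = XY` of zero mean correlated normals: for every twice differentiable `f` with the stated
integrability conditions,
`E[(W − nρ) f(W)] = E[(1 − ρ²) W f''(W) + (n(1 − ρ²) + 2ρW) f'(W)]`. -/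
theorem sum_product_normal_stein_identity
    {Ω : Type*} [MeasurableSpace Ω] (P : Measure Ω) [IsProbabilityMeasure P]
    (ρ : ℝ) (hρ : ρ ∈ Set.Ioo (-1 : ℝ) 1) (n : ℕ) (hn : 1 ≤ n)
    (Zs : Fin n → Ω → ℝ) (hmeas : ∀ i, Measurable (Zs i))
    (hindep : iIndepFun Zs P)
    (hlaw : ∀ i, P.map (Zs i) = lawZ ρ)
    (W : Ω → ℝ) (hW : ∀ ω, W ω = ∑ i, Zs i ω)
    (f : ℝ → ℝ) (hf : Differentiable ℝ f) (hf' : Differentiable ℝ (deriv f))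
    (h1 : Integrable (fun ω => f (W ω)) P)
    (h2 : Integrable (fun ω => W ω * f (W ω)) P)
    (h3 : Integrable (fun ω => deriv f (W ω)) P)
    (h4 : Integrable (fun ω => W ω * deriv f (W ω)) P)
    (h5 : Integrable (fun ω => W ω * deriv (deriv f) (W ω)) P) :
    ∫ ω, (W ω - n * ρ) * f (W ω) ∂P
      = ∫ ω, ((1 - ρ ^ 2) * W ω * deriv (deriv f) (W ω)
          + (n * (1 - ρ ^ 2) + 2 * ρ * W ω) * deriv f (W ω)) ∂P := by
  have hmap : P.map W = sumMeasure ρ n := by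
    rw [show W = fun ω => ∑ i, Zs i ω from funext hW, map_sum_eq_chiSqMixture hρ hn hmeas hindep
      hlaw, chiSqMixture_eq_withDensity hρ hn, sumMeasure]
  have hWm : Measurable W := by
    rw [show W = fun ω => ∑ i, Zs i ω from funext hW]
    exact Finset.measurable_sum _ fun i _ => hmeas i
  have hm := hf.continuous.measurable
  have hm₁ := hf'.continuous.measurable
  have hm₂ := measurable_deriv (deriv f)
  have transfer : ∀ {g : ℝ → ℝ}, Measurable g → Integrable (fun ω => g (W ω)) P →
      Integrable g (sumMeasure ρ n) := fun hg h => by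
    rw [← hmap]
    exact (integrable_map_measure hg.aestronglyMeasurable hWm.aemeasurable).2 h
  have key := integral_steinOp_eq_zero hρ hn (fun x => (hf x).hasDerivAt)
    (fun x => (hf' x).hasDerivAt) (transfer hm h1) (transfer (by fun_prop) h2) (transfer hm₁ h3)
    (transfer (by fun_prop) h4) (transfer (by fun_prop) h5)
  rw [← hmap, integral_map hWm.aemeasurable
    (Measurable.aestronglyMeasurable (by unfold steinOp; fun_prop))] at key
  simp only [steinOp] at key
  have i1 : Integrable (fun ω => (W ω - n * ρ) * f (W ω)) P := by
    refine (h2.sub (h1.const_mul (n * ρ))).congr (.of_forall fun ω => ?_)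
    simp only [Pi.sub_apply]
    ring
  have i2 : Integrable (fun ω => (1 - ρ ^ 2) * W ω * deriv (deriv f) (W ω)
      + (n * (1 - ρ ^ 2) + 2 * ρ * W ω) * deriv f (W ω)) P := by
    refine ((h5.const_mul (1 - ρ ^ 2)).add ((h3.const_mul (n * (1 - ρ ^ 2))).add
      (h4.const_mul (2 * ρ)))).congr (.of_forall fun ω => ?_)
    simp only [Pi.add_apply]
    ring
  rw [integral_sub i2 i1, sub_eq_zero] at key
  exact key.symm
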